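/- There exists C > 0 such that for every differentiable u : ℝ³ → ℂ with ∇u ∈ L²(ℝ³) and ‖u‖_{L²} = 1 the following holds. Set w = |u|² and ŵ(k) = ∫_{ℝ³} e^{−ik·x} w(x) dx. Then the functions k ↦ v(k)ŵ(k) and k ↦ |k|·v(k)·ŵ(k) are integrable on ℝ³, and for every x ∈ ℝ³: |∫_{ℝ³} v(k) e^{ik·x} ŵ(k) dk| ≤ C ‖u‖_{H¹}^{3/2} and |∫_{ℝ³} v(k) k e^{ik·x} ŵ(k) dk| ≤ C ‖u‖_{H¹}^{3/2}. (Up to a universal constant these two integrals represent the convolution V∗|u|² and its gradient ∇(V∗|u|²) for the effective pair potential V.) -/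

import Mathlib

open MeasureTheory
open scoped ENNReal

noncomputable section

/-- The dispersion relation `ω(k) = √(1+|k|²)` of the massive scalar field. -/
def ω (k : EuclideanSpace ℝ (Fin 3)) : ℝ := Real.sqrt (1 + ‖k‖ ^ 2)

/-- `v(k) = −4/(ω(k)(|k|²+ω(k))) + 2/(|k|²+ω(k))²`, which is `(2π)^{3/2}` times the
Fourier transform of the effective pair potential `V` of the dressed Nelson model. -/
def vker (k : EuclideanSpace ℝ (Fin 3)) : ℝ :=
  -4 / (ω k * (‖k‖ ^ 2 + ω k)) + 2 / (‖k‖ ^ 2 + ω k) ^ 2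

/-- The square of the `H¹`-norm, `‖u‖_{H¹}² = ‖u‖_{L²}² + ‖∇u‖_{L²}²`. -/
def H1sq (u : EuclideanSpace ℝ (Fin 3) → ℂ) : ℝ :=
  (∫ x, ‖u x‖ ^ 2) + ∫ x, ‖fderiv ℝ u x‖ ^ 2

/-- The `H¹`-norm of `u`. -/
def H1norm (u : EuclideanSpace ℝ (Fin 3) → ℂ) : ℝ := Real.sqrt (H1sq u)

/-- `ŵ(k) = ∫ e^{−ik·y} |u(y)|² dy`, the unnormalized Fourier transform of `w = |u|²`. -/
def what (u : EuclideanSpace ℝ (Fin 3) → ℂ) (k : EuclideanSpace ℝ (Fin 3)) : ℂ :=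
  ∫ y, Complex.exp (-(Complex.I * ((inner ℝ k y : ℝ) : ℂ))) * ((‖u y‖ ^ 2 : ℝ) : ℂ)

/-- `k` viewed as a vector in `ℂ³`. -/
def kC (k : EuclideanSpace ℝ (Fin 3)) : EuclideanSpace ℂ (Fin 3) :=
  (WithLp.equiv 2 (Fin 3 → ℂ)).symm (fun j => (k j : ℂ))


open scoped FourierTransform ContDiff in
theorem planch {f : EuclideanSpace ℝ (Fin 3) → ℂ} (hf1 : Integrable f) (hf2 : MemLp f 2 volume) :
    MemLp (𝓕 f) 2 volume ∧ eLpNorm (𝓕 f) 2 volume = eLpNorm f 2 volume := by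
  set g : Lp (α := EuclideanSpace ℝ (Fin 3)) ℂ 2 := hf2.toLp f with hg
  have hcont : Continuous (𝓕 f) :=
    VectorFourier.fourierIntegral_continuous (L := innerₗ (EuclideanSpace ℝ (Fin 3)))
      Real.continuous_fourierChar continuous_inner hf1
  have key : ∀ᵐ x ∂(volume : Measure (EuclideanSpace ℝ (Fin 3))), (𝓕 f) x = (𝓕 g : Lp (α := EuclideanSpace ℝ (Fin 3)) ℂ 2 volume) x := by
    apply ae_eq_of_integral_contDiff_smul_eq
    · exact hcont.locallyIntegrable
    · exact (Lp.memLp _).locallyIntegrable (by norm_num)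
    · intro φ hφ hc
      have hg₁ : HasCompactSupport (Complex.ofRealCLM ∘ φ) := hc.comp_left rfl
      have hg₂ : ContDiff ℝ ∞ (Complex.ofRealCLM ∘ φ) := by fun_prop
      set ψ := hg₁.toSchwartzMap hg₂ with hψ
      have h1 := congrArg (fun T => T ψ) (Lp.fourier_toTemperedDistribution_eq g)
      simp only [TemperedDistribution.fourier_apply, Lp.toTemperedDistribution_apply] at h1
      have h2 : ∫ x, (𝓕 ψ) x • g x = ∫ x, (𝓕 ψ) x • f x := by
        apply integral_congr_ae
        filter_upwards [hf2.coeFn_toLp] with x hx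
        rw [hg, hx]
      have h3 : ∫ x, (𝓕 ψ) x • f x = ∫ x, ψ x • 𝓕 f x := by
        have := VectorFourier.integral_fourierIntegral_smul_eq_flip (L := innerₗ (EuclideanSpace ℝ (Fin 3))) Real.continuous_fourierChar continuous_inner (ψ.integrable (μ := volume)) hf1
        rw [flip_innerₗ] at this
        exact this
      rw [h2, h3] at h1
      simpa [hψ] using h1
  refine ⟨(memLp_congr_ae key).2 (Lp.memLp _), ?_⟩
  rw [eLpNorm_congr_ae key]
  have := Lp.norm_fourier_eq g
  rw [Lp.norm_def, Lp.norm_def, ENNReal.toReal_eq_toReal_iff' (Lp.eLpNorm_ne_top _) (Lp.eLpNorm_ne_top _)] at this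
  rw [this]
  exact eLpNorm_congr_ae hf2.coeFn_toLp

theorem cs {α : Type*} [MeasurableSpace α] (μ : Measure α) {f g : α → ℝ≥0∞} (hf : Measurable f)
    (hg : Measurable g) : (∫⁻ x, f x * g x ∂μ) ^ 2 ≤ (∫⁻ x, f x ^ 2 ∂μ) * ∫⁻ x, g x ^ 2 ∂μ := by
  have h := ENNReal.lintegral_mul_le_Lp_mul_Lq μ (p := 2) (q := 2) (by constructor <;> norm_num) hf.aemeasurable hg.aemeasurable
  calc _ ≤ _ := pow_le_pow_left' h 2
    _ = _ := by
      rw [mul_pow]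
      simp only [← ENNReal.rpow_natCast, ← ENNReal.rpow_mul]
      norm_num

theorem line1 (φ : ℝ → ℂ) (hφ : Differentiable ℝ φ) (b : ℝ → ℝ≥0∞)
    (hb : ∀ t, 2 * ‖deriv φ t‖ₑ ≤ b t) (hfin : ∫⁻ t, ‖φ t‖ₑ ^ 2 ≠ ∞) (x : ℝ) :
    ‖φ x‖ₑ ^ 2 ≤ ∫⁻ t, ‖φ t‖ₑ * b t := by
  set w : ℝ → ℝ := fun t => ‖φ t‖ ^ 2 with hw
  have hwd : ∀ t, HasDerivAt w (2 * inner ℝ (φ t) (deriv φ t)) t := fun t =>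
    (hφ t).hasDerivAt.norm_sq
  have hdw : deriv w = fun t => 2 * inner ℝ (φ t) (deriv φ t) := funext fun t => (hwd t).deriv
  have hbd : ∀ t, ‖deriv w t‖ₑ ≤ ‖φ t‖ₑ * b t := by
    intro t
    calc ‖deriv w t‖ₑ ≤ ‖φ t‖ₑ * (2 * ‖deriv φ t‖ₑ) := by
          rw [hdw, ← ofReal_norm, ← ofReal_norm, ← ofReal_norm,
            show (2:ℝ≥0∞) = ENNReal.ofReal 2 by simp, ← ENNReal.ofReal_mul (by norm_num), ← ENNReal.ofReal_mul (by positivity)]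
          apply ENNReal.ofReal_le_ofReal
          have := norm_inner_le_norm (𝕜 := ℝ) (φ t) (deriv φ t)
          rw [norm_mul]
          norm_num at this ⊢
          linarith
      _ ≤ _ := by gcongr; exact hb t
  refine le_trans ?_ (lintegral_mono hbd)
  by_cases hI : ∫⁻ t, ‖deriv w t‖ₑ = ∞
  · rw [hI]; exact le_top
  have hint : Integrable (deriv w) := ⟨(measurable_deriv w).aestronglyMeasurable, by
    rw [hasFiniteIntegral_iff_enorm]; exact lt_top_iff_ne_top.2 hI⟩
  rw [← ofReal_integral_norm_eq_lintegral_enorm hint, ← ofReal_norm, ← ENNReal.ofReal_pow (by positivity)]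
  apply ENNReal.ofReal_le_ofReal
  set J := ∫ t, ‖deriv w t‖ with hJ
  change w x ≤ J
  by_contra! hlt
  have hlow : ∀ t, w x - J ≤ w t := by
    intro t
    have h1 : ∫ s in t..x, deriv w s = w x - w t :=
      intervalIntegral.integral_eq_sub_of_hasDerivAt (fun s _ => by simpa [hdw] using hwd s) hint.intervalIntegrable
    have h2 : ‖∫ s in t..x, deriv w s‖ ≤ J :=
      (intervalIntegral.norm_integral_le_integral_norm_uIoc).trans
        (setIntegral_le_integral hint.norm (Filter.Eventually.of_forall fun _ => norm_nonneg _))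
    rw [h1, Real.norm_eq_abs] at h2
    linarith [le_abs_self (w x - w t)]
  apply hfin
  rw [eq_top_iff]
  calc ∞ = ∫⁻ t : ℝ, ENNReal.ofReal (w x - J) := by
        simp [ENNReal.mul_top, hlt]
    _ ≤ _ := by
      apply lintegral_mono
      intro t
      simp only
      rw [← ofReal_norm, ← ENNReal.ofReal_pow (by positivity)]
      exact ENNReal.ofReal_le_ofReal (hlow t)

theorem two_d {f g : ℝ × ℝ → ℝ≥0∞} (hg : Measurable g)
    (h1 : ∀ᵐ p, f p ≤ ∫⁻ t, g (t, p.2)) (h2 : ∀ᵐ p, f p ≤ ∫⁻ t, g (p.1, t)) :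
    ∫⁻ p, f p ^ 2 ≤ (∫⁻ p, g p) ^ 2 := by
  have e1 : ∫⁻ y, ∫⁻ t, g (y, t) = ∫⁻ p, g p := by
    rw [Measure.volume_eq_prod, lintegral_prod _ hg.aemeasurable]
  have e2 : ∫⁻ z, ∫⁻ t, g (t, z) = ∫⁻ p, g p := by
    rw [Measure.volume_eq_prod, lintegral_prod_symm _ hg.aemeasurable]
  calc ∫⁻ p, f p ^ 2 ≤ ∫⁻ p : ℝ × ℝ, (∫⁻ t, g (p.1, t)) * (∫⁻ t, g (t, p.2)) := by
        apply lintegral_mono_ae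
        filter_upwards [h1, h2] with p a b
        rw [pow_two]
        exact mul_le_mul' b a
    _ = (∫⁻ y, ∫⁻ t, g (y, t)) * ∫⁻ z, ∫⁻ t, g (t, z) := by
        rw [Measure.volume_eq_prod]
        exact lintegral_prod_mul (f := fun y => ∫⁻ t, g (y, t)) (g := fun z => ∫⁻ t, g (t, z)) hg.lintegral_prod_right'.aemeasurable hg.lintegral_prod_left'.aemeasurable
    _ = _ := by rw [e1, e2, pow_two]

theorem three_d {a b : ℝ × ℝ × ℝ → ℝ≥0∞} (ha : Measurable a) (hb : Measurable b)
    (hfin : ∫⁻ p, a p ^ 2 ≠ ∞)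
    (h1 : ∀ q, ∫⁻ t, a (t, q) ^ 2 ≠ ∞ → ∀ t, a (t, q) ^ 2 ≤ ∫⁻ s, a (s, q) * b (s, q))
    (h2 : ∀ x z, ∫⁻ t, a (x, t, z) ^ 2 ≠ ∞ → ∀ t, a (x, t, z) ^ 2 ≤ ∫⁻ s, a (x, s, z) * b (x, s, z))
    (h3 : ∀ x y, ∫⁻ t, a (x, y, t) ^ 2 ≠ ∞ → ∀ t, a (x, y, t) ^ 2 ≤ ∫⁻ s, a (x, y, s) * b (x, y, s)) :
    ∫⁻ p, a p ^ 4 ≤ (∫⁻ p, a p * b p) * ∫⁻ p, b p ^ 2 := by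
  have ha2 : Measurable fun p => a p ^ 2 := ha.pow_const 2
  have hfinx : ∀ᵐ x, ∫⁻ q, a (x, q) ^ 2 < ∞ := by
    apply ae_lt_top ha2.lintegral_prod_right'
    rw [Measure.volume_eq_prod, lintegral_prod _ ha2.aemeasurable] at hfin
    exact hfin
  have hfinq : ∀ᵐ q, ∫⁻ x, a (x, q) ^ 2 < ∞ := by
    apply ae_lt_top ha2.lintegral_prod_left'
    rw [Measure.volume_eq_prod, lintegral_prod_symm _ ha2.aemeasurable] at hfin
    exact hfin
  have hslice : ∀ x, ∫⁻ q, a (x, q) ^ 2 ≤ ∫⁻ p, a p * b p := by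
    intro x
    rw [Measure.volume_eq_prod ℝ (ℝ × ℝ), lintegral_prod_symm (fun p => a p * b p) (ha.mul hb).aemeasurable]
    apply lintegral_mono_ae
    filter_upwards [hfinq] with q hq
    exact h1 q hq.ne x
  have hx : ∀ᵐ x, ∫⁻ q, a (x, q) ^ 4 ≤ (∫⁻ p, a p * b p) * ∫⁻ q, b (x, q) ^ 2 := by
    filter_upwards [hfinx] with x hxx
    have hax : Measurable fun q => a (x, q) := ha.comp measurable_prodMk_left
    have hbx : Measurable fun q => b (x, q) := hb.comp measurable_prodMk_left
    have hax2 : Measurable fun q => a (x, q) ^ 2 := hax.pow_const 2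
    have A : ∀ᵐ z, ∫⁻ y, a (x, y, z) ^ 2 < ∞ := by
      apply ae_lt_top hax2.lintegral_prod_left'
      rw [Measure.volume_eq_prod, lintegral_prod_symm _ hax2.aemeasurable] at hxx
      exact hxx.ne
    have B : ∀ᵐ y, ∫⁻ z, a (x, y, z) ^ 2 < ∞ := by
      apply ae_lt_top hax2.lintegral_prod_right'
      rw [Measure.volume_eq_prod, lintegral_prod _ hax2.aemeasurable] at hxx
      exact hxx.ne
    have A' : ∀ᵐ p : ℝ × ℝ, ∫⁻ y, a (x, y, p.2) ^ 2 < ∞ :=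
      Measure.quasiMeasurePreserving_snd.ae A
    have B' : ∀ᵐ p : ℝ × ℝ, ∫⁻ z, a (x, p.1, z) ^ 2 < ∞ :=
      Measure.quasiMeasurePreserving_fst.ae B
    calc ∫⁻ q, a (x, q) ^ 4 = ∫⁻ q, (a (x, q) ^ 2) ^ 2 := by simp only [← pow_mul]
      _ ≤ (∫⁻ q, a (x, q) * b (x, q)) ^ 2 := by
        apply two_d (hax.mul hbx)
        · filter_upwards [A'] with p hp
          exact h2 x p.2 hp.ne p.1
        · filter_upwards [B'] with p hp
          exact h3 x p.1 hp.ne p.2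
      _ ≤ _ := cs _ hax hbx
      _ ≤ _ := by gcongr; exact hslice x
  calc ∫⁻ p, a p ^ 4 = ∫⁻ x, ∫⁻ q, a (x, q) ^ 4 := by
        rw [Measure.volume_eq_prod, lintegral_prod _ (ha.pow_const 4).aemeasurable]
    _ ≤ ∫⁻ x, (∫⁻ p, a p * b p) * ∫⁻ q, b (x, q) ^ 2 := lintegral_mono_ae hx
    _ = _ := by
      rw [lintegral_const_mul _ (hb.pow_const 2).lintegral_prod_right']
      congr 1
      rw [Measure.volume_eq_prod ℝ (ℝ × ℝ), lintegral_prod _ (hb.pow_const 2).aemeasurable]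

theorem deriv_line {u : EuclideanSpace ℝ (Fin 3) → ℂ} (hu : Differentiable ℝ u)
    (c v : EuclideanSpace ℝ (Fin 3)) (hv : ‖v‖ = 1) :
    Differentiable ℝ (fun t : ℝ => u (c + t • v)) ∧
    ∀ t, 2 * ‖deriv (fun t : ℝ => u (c + t • v)) t‖ₑ ≤ 2 * ‖fderiv ℝ u (c + t • v)‖ₑ := by
  have h : ∀ t, HasDerivAt (fun t : ℝ => u (c + t • v)) (fderiv ℝ u (c + t • v) v) t := by
    intro t
    have h1 : HasDerivAt (fun t : ℝ => c + t • v) v t := by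
      simpa using ((hasDerivAt_id t).smul_const v).const_add c
    exact (hu _).hasFDerivAt.comp_hasDerivAt t h1
  refine ⟨fun t => (h t).differentiableAt, fun t => ?_⟩
  rw [(h t).deriv]
  gcongr
  rw [← ofReal_norm, ← ofReal_norm]
  apply ENNReal.ofReal_le_ofReal
  simpa [hv] using (fderiv ℝ u (c + t • v)).le_opNorm v

def e3 (p : ℝ × ℝ × ℝ) : EuclideanSpace ℝ (Fin 3) := WithLp.toLp 2 ![p.1, p.2.1, p.2.2]

theorem e3_mp : MeasurePreserving e3 volume volume := by
  have h1 := (volume_preserving_piFinSuccAbove (fun _ : Fin 3 => ℝ) 0).symm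
  have h2 := (volume_preserving_finTwoArrow ℝ).symm
  have h3 := PiLp.volume_preserving_toLp (Fin 3)
  have h4 := h3.comp (h1.comp ((MeasurePreserving.id (volume : Measure ℝ)).prod h2))
  convert! h4 using 1
  funext p
  ext i
  fin_cases i <;> rfl

theorem e3_line1 (t : ℝ) (q : ℝ × ℝ) :
    e3 (t, q) = e3 (0, q) + t • EuclideanSpace.single (0 : Fin 3) (1 : ℝ) := by
  ext i; fin_cases i <;> simp [e3]
theorem e3_line2 (x t z : ℝ) :
    e3 (x, t, z) = e3 (x, 0, z) + t • EuclideanSpace.single (1 : Fin 3) (1 : ℝ) := by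
  ext i; fin_cases i <;> simp [e3]
theorem e3_line3 (x y t : ℝ) :
    e3 (x, y, t) = e3 (x, y, 0) + t • EuclideanSpace.single (2 : Fin 3) (1 : ℝ) := by
  ext i; fin_cases i <;> simp [e3]

theorem ladyz0 {u : EuclideanSpace ℝ (Fin 3) → ℂ} (hu : Differentiable ℝ u)
    (hfin : ∫⁻ x, ‖u x‖ₑ ^ 2 ≠ ∞) :
    ∫⁻ x, ‖u x‖ₑ ^ 4 ≤ (∫⁻ x, ‖u x‖ₑ * (2 * ‖fderiv ℝ u x‖ₑ)) * ∫⁻ x, (2 * ‖fderiv ℝ u x‖ₑ) ^ 2 := by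
  have ma : Measurable fun x => ‖u x‖ₑ := hu.continuous.measurable.enorm
  have mb : Measurable fun x => 2 * ‖fderiv ℝ u x‖ₑ := (measurable_fderiv ℝ u).enorm.const_mul 2
  rw [← e3_mp.lintegral_comp (ma.pow_const 4), ← e3_mp.lintegral_comp (f := fun x => ‖u x‖ₑ * (2 * ‖fderiv ℝ u x‖ₑ)) (ma.mul mb),
    ← e3_mp.lintegral_comp (mb.pow_const 2)]
  rw [← e3_mp.lintegral_comp (ma.pow_const 2)] at hfin
  refine three_d (a := fun p => ‖u (e3 p)‖ₑ) (b := fun p => 2 * ‖fderiv ℝ u (e3 p)‖ₑ)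
    (ma.comp e3_mp.measurable) (mb.comp e3_mp.measurable) hfin ?_ ?_ ?_
  · intro q
    obtain ⟨h1, h2⟩ := deriv_line hu (e3 (0, q)) (EuclideanSpace.single (0 : Fin 3) (1 : ℝ)) (by simp)
    have h := line1 _ h1 _ h2
    simp only [← e3_line1] at h
    exact h
  · intro x z
    obtain ⟨h1, h2⟩ := deriv_line hu (e3 (x, 0, z)) (EuclideanSpace.single (1 : Fin 3) (1 : ℝ)) (by simp)
    have h := line1 _ h1 _ h2
    simp only [← e3_line2] at h
    exact h
  · intro x y
    obtain ⟨h1, h2⟩ := deriv_line hu (e3 (x, y, 0)) (EuclideanSpace.single (2 : Fin 3) (1 : ℝ)) (by simp)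
    have h := line1 _ h1 _ h2
    simp only [← e3_line3] at h
    exact h

theorem lint_sq {F : Type*} [NormedAddCommGroup F] {f : EuclideanSpace ℝ (Fin 3) → F}
    (hf : MemLp f 2 volume) : ∫⁻ x, ‖f x‖ₑ ^ 2 = ENNReal.ofReal (∫ x, ‖f x‖ ^ 2) := by
  rw [ofReal_integral_eq_lintegral_ofReal ((memLp_two_iff_integrable_sq_norm hf.1).1 hf)
    (Filter.Eventually.of_forall fun _ => by positivity)]
  congr 1; funext x
  rw [ENNReal.ofReal_pow (norm_nonneg _), ofReal_norm]

theorem ladyz {u : EuclideanSpace ℝ (Fin 3) → ℂ} (hu : Differentiable ℝ u)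
    (h2 : MemLp u 2 volume) (hd : MemLp (fun x => fderiv ℝ u x) 2 volume)
    (h1 : (∫ x, ‖u x‖ ^ 2) = 1) :
    MemLp (fun x => ((‖u x‖ ^ 2 : ℝ) : ℂ)) 2 volume ∧
      ∫ x, ‖((‖u x‖ ^ 2 : ℝ) : ℂ)‖ ^ 2 ≤ 8 * H1norm u ^ 3 := by
  have ma : Measurable fun x => ‖u x‖ₑ := hu.continuous.measurable.enorm
  have mb : Measurable fun x => 2 * ‖fderiv ℝ u x‖ₑ := (measurable_fderiv ℝ u).enorm.const_mul 2
  set D := ∫ x, ‖fderiv ℝ u x‖ ^ 2 with hD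
  have hD0 : 0 ≤ D := integral_nonneg fun _ => by positivity
  have hA := lint_sq h2
  rw [h1, ENNReal.ofReal_one] at hA
  have hB : ∫⁻ x, (2 * ‖fderiv ℝ u x‖ₑ) ^ 2 = ENNReal.ofReal (4 * D) := by
    simp only [mul_pow]
    rw [lintegral_const_mul _ ((measurable_fderiv ℝ u).enorm.pow_const 2), lint_sq hd,
      ENNReal.ofReal_mul (by norm_num), ← hD]
    norm_num
  have hW := ladyz0 hu (by rw [hA]; simp)
  have hI := cs volume ma mb
  rw [hA, hB, one_mul] at hI
  rw [hB] at hW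
  have hW2 : (∫⁻ x, ‖u x‖ₑ ^ 4) ^ 2 ≤ ENNReal.ofReal ((4 * D) ^ 3) := by
    calc _ ≤ _ := pow_le_pow_left' hW 2
      _ ≤ ENNReal.ofReal (4 * D) * ENNReal.ofReal (4 * D) ^ 2 := by rw [mul_pow]; gcongr
      _ = _ := by rw [ENNReal.ofReal_pow (by positivity)]; ring
  have hWfin : ∫⁻ x, ‖u x‖ₑ ^ 4 ≠ ∞ := by
    intro h
    rw [h] at hW2
    simp at hW2
  have hcont : Continuous (fun x => ((‖u x‖ ^ 2 : ℝ) : ℂ)) := by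
    have := hu.continuous
    fun_prop
  have hint : Integrable (fun x => ‖((‖u x‖ ^ 2 : ℝ) : ℂ)‖ ^ 2) := by
    refine ⟨(hcont.norm.pow 2).aestronglyMeasurable, ?_⟩
    rw [hasFiniteIntegral_iff_enorm, lt_top_iff_ne_top]
    convert hWfin using 3 with x
    rw [enorm_pow, enorm_norm, ← ofReal_norm, Complex.norm_real, ofReal_norm, enorm_pow, enorm_norm, ← pow_mul]
  have hm : MemLp (fun x => ((‖u x‖ ^ 2 : ℝ) : ℂ)) 2 volume :=
    (memLp_two_iff_integrable_sq_norm hcont.aestronglyMeasurable).2 hint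
  refine ⟨hm, ?_⟩
  have hV := lint_sq hm
  have hV' : ∫⁻ x, ‖u x‖ₑ ^ 4 = ∫⁻ x, ‖((‖u x‖ ^ 2 : ℝ) : ℂ)‖ₑ ^ 2 := by
    congr 1; funext x
    rw [← ofReal_norm ((‖u x‖ ^ 2 : ℝ) : ℂ), Complex.norm_real, ofReal_norm, enorm_pow, enorm_norm, ← pow_mul]
  rw [hV', hV, ← ENNReal.ofReal_pow (integral_nonneg fun _ => by positivity),
    ENNReal.ofReal_le_ofReal_iff (by positivity)] at hW2
  have hH : H1norm u ^ 2 = 1 + D := by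
    rw [H1norm, H1sq, h1, Real.sq_sqrt (by positivity)]
  have hH0 : 0 ≤ H1norm u := Real.sqrt_nonneg _
  refine le_of_sq_le_sq ?_ (by positivity)
  calc _ ≤ _ := hW2
    _ ≤ (4 * (1 + D)) ^ 3 := by gcongr; linarith
    _ = _ := by rw [← hH]; ring

open scoped FourierTransform in
theorem what_eq (u : EuclideanSpace ℝ (Fin 3) → ℂ) (k : EuclideanSpace ℝ (Fin 3)) :
    what u k = 𝓕 (fun x => ((‖u x‖ ^ 2 : ℝ) : ℂ)) ((2 * Real.pi)⁻¹ • k) := by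
  rw [Real.fourier_eq', what]
  congr 1; funext y
  rw [smul_eq_mul, real_inner_smul_right, real_inner_comm]
  congr 2
  have : (Real.pi : ℂ) ≠ 0 := by exact_mod_cast Real.pi_ne_zero
  push_cast
  field_simp

theorem vker_bound (k : EuclideanSpace ℝ (Fin 3)) :
    (1 + ‖k‖) * |vker k| ≤ 12 * (1 + ‖k‖ ^ 2)⁻¹ := by
  have hs : 1 ≤ 1 + ‖k‖ ^ 2 := by nlinarith [sq_nonneg ‖k‖]
  have hw2 : ω k ^ 2 = 1 + ‖k‖ ^ 2 := Real.sq_sqrt (by positivity)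
  have hw1 : 1 ≤ ω k := Real.one_le_sqrt.2 hs
  have hwk : ‖k‖ ≤ ω k := Real.le_sqrt_of_sq_le (by linarith)
  unfold vker
  set w := ω k
  set s := 1 + ‖k‖ ^ 2
  have hs' : s ≤ ‖k‖ ^ 2 + w := by simp only [s]; linarith
  have hws : w ≤ s := by nlinarith
  have h1 : |-4 / (w * (‖k‖ ^ 2 + w)) + 2 / (‖k‖ ^ 2 + w) ^ 2| ≤ 4 / (w * s) + 2 / s ^ 2 := by
    refine (abs_add_le _ _).trans ?_
    rw [abs_div, abs_div, abs_of_nonneg (by positivity : 0 ≤ w * (‖k‖ ^ 2 + w)), abs_of_nonneg (by positivity : 0 ≤ (‖k‖ ^ 2 + w) ^ 2)]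
    norm_num
    gcongr
  have h2 : 2 / s ^ 2 ≤ 2 / (w * s) := by
    gcongr; nlinarith
  calc _ ≤ (2 * w) * (4 / (w * s) + 2 / (w * s)) := by
        gcongr
        · linarith
        · linarith
    _ = _ := by field_simp; norm_num

open scoped FourierTransform in
theorem what_L2 {u : EuclideanSpace ℝ (Fin 3) → ℂ} (hu : Differentiable ℝ u)
    (h2 : MemLp u 2 volume) (hd : MemLp (fun x => fderiv ℝ u x) 2 volume)
    (h1 : (∫ x, ‖u x‖ ^ 2) = 1) :
    MemLp (what u) 2 volume ∧ ∫ x, ‖what u x‖ ^ 2 ≤ (2 * Real.pi) ^ 3 * (8 * H1norm u ^ 3) := by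
  obtain ⟨hm, hb⟩ := ladyz hu h2 hd h1
  have hi : Integrable (fun x => ((‖u x‖ ^ 2 : ℝ) : ℂ)) :=
    ((memLp_two_iff_integrable_sq_norm h2.1).1 h2).ofReal
  obtain ⟨p1, p2⟩ := planch hi hm
  have hpi : (2 * Real.pi)⁻¹ ≠ 0 := by positivity
  have hwe := funext (what_eq u)
  have hcont : Continuous (𝓕 (fun x => ((‖u x‖ ^ 2 : ℝ) : ℂ))) :=
    VectorFourier.fourierIntegral_continuous (L := innerₗ (EuclideanSpace ℝ (Fin 3)))
      Real.continuous_fourierChar continuous_inner hi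
  have hq : ∫ x, ‖𝓕 (fun x => ((‖u x‖ ^ 2 : ℝ) : ℂ)) x‖ ^ 2 = ∫ x, ‖((‖u x‖ ^ 2 : ℝ) : ℂ)‖ ^ 2 := by
    have a1 := lint_sq p1
    have a2 := lint_sq hm
    have : ∫⁻ x, ‖𝓕 (fun x => ((‖u x‖ ^ 2 : ℝ) : ℂ)) x‖ₑ ^ 2 = ∫⁻ x, ‖((‖u x‖ ^ 2 : ℝ) : ℂ)‖ₑ ^ 2 := by
      have := congrArg (fun z => z ^ 2) p2
      simp only [eLpNorm_eq_lintegral_rpow_enorm_toReal (p := 2) (by norm_num) (by norm_num)] at this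
      simp only [← ENNReal.rpow_natCast, ← ENNReal.rpow_mul] at this ⊢
      norm_num at this ⊢
      exact this
    rw [a1, a2, ENNReal.ofReal_eq_ofReal_iff (integral_nonneg fun _ => by positivity) (integral_nonneg fun _ => by positivity)] at this
    exact this
  rw [hwe]
  constructor
  · refine (memLp_two_iff_integrable_sq_norm
      (hcont.comp (continuous_const_smul _)).aestronglyMeasurable).2 ?_
    exact ((memLp_two_iff_integrable_sq_norm p1.1).1 p1).comp_smul hpi
  · rw [Measure.integral_comp_smul volume (fun x => ‖𝓕 (fun x => ((‖u x‖ ^ 2 : ℝ) : ℂ)) x‖ ^ 2), hq]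
    simp only [finrank_euclideanSpace, Fintype.card_fin, smul_eq_mul]
    rw [inv_pow, inv_inv, abs_of_nonneg (by positivity)]
    gcongr

/-- There is `C > 0` such that for every differentiable `u` with `∇u ∈ L²` and `‖u‖_{L²} = 1`:
`k ↦ v(k)ŵ(k)` and `k ↦ |k| v(k) ŵ(k)` are integrable, and for every `x`,
`|∫ v(k) e^{ik·x} ŵ(k) dk| ≤ C‖u‖_{H¹}^{3/2}` and `|∫ v(k) k e^{ik·x} ŵ(k) dk| ≤ C‖u‖_{H¹}^{3/2}`.
(These integrals represent `V∗|u|²` and `∇(V∗|u|²)` up to a universal constant.) -/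
theorem convolution_bounds :
    ∃ C > 0, ∀ u : EuclideanSpace ℝ (Fin 3) → ℂ,
      Differentiable ℝ u → MemLp u 2 volume →
      MemLp (fun x => fderiv ℝ u x) 2 volume →
      (∫ x, ‖u x‖ ^ 2) = 1 →
      Integrable (fun k => ((vker k : ℝ) : ℂ) * what u k) volume ∧
      Integrable (fun k => ‖k‖ * ‖((vker k : ℝ) : ℂ) * what u k‖) volume ∧
      (∀ x : EuclideanSpace ℝ (Fin 3),
        ‖∫ k, ((vker k : ℝ) : ℂ) *
            Complex.exp (Complex.I * ((inner ℝ k x : ℝ) : ℂ)) * what u k‖ ≤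
          C * H1norm u ^ (3 / 2 : ℝ)) ∧
      (∀ x : EuclideanSpace ℝ (Fin 3),
        ‖∫ k, (((vker k : ℝ) : ℂ) *
            Complex.exp (Complex.I * ((inner ℝ k x : ℝ) : ℂ)) * what u k) • kC k‖ ≤
          C * H1norm u ^ (3 / 2 : ℝ)) := by
  have hs2 : Integrable (fun k : EuclideanSpace ℝ (Fin 3) => ((1 + ‖k‖ ^ 2)⁻¹) ^ 2) := by
    have := integrable_rpow_neg_one_add_norm_sq (E := EuclideanSpace ℝ (Fin 3)) (μ := volume)
      (r := 4) (by simp; norm_num)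
    refine this.congr (Filter.Eventually.of_forall fun k => ?_)
    simp only
    rw [show (-4 / 2 : ℝ) = -((2 : ℕ) : ℝ) by norm_num, Real.rpow_neg (by positivity),
      Real.rpow_natCast, inv_pow]
  have hscont : Continuous (fun k : EuclideanSpace ℝ (Fin 3) => (1 + ‖k‖ ^ 2)⁻¹) := by
    apply Continuous.inv₀ (by fun_prop)
    intro k; positivity
  have hsL : MemLp (fun k : EuclideanSpace ℝ (Fin 3) => (1 + ‖k‖ ^ 2)⁻¹) 2 volume :=
    (memLp_two_iff_integrable_sq hscont.aestronglyMeasurable).2 hs2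
  set K := ∫ k : EuclideanSpace ℝ (Fin 3), ((1 + ‖k‖ ^ 2)⁻¹) ^ 2 with hK
  have hK0 : 0 ≤ K := integral_nonneg fun _ => by positivity
  refine ⟨12 * √(K * ((2 * Real.pi) ^ 3 * 8)) + 1, by positivity, ?_⟩
  intro u hu h2 hd h1
  obtain ⟨hw, hwb⟩ := what_L2 hu h2 hd h1
  have hH0 : 0 ≤ H1norm u := Real.sqrt_nonneg _
  have hG : Integrable (fun k => (1 + ‖k‖ ^ 2)⁻¹ * ‖what u k‖) := hsL.integrable_mul hw.norm
  have hP : ∫ k, (1 + ‖k‖ ^ 2)⁻¹ * ‖what u k‖ ≤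
      √(K * ((2 * Real.pi) ^ 3 * 8)) * H1norm u ^ (3 / 2 : ℝ) := by
    have := integral_mul_le_Lp_mul_Lq_of_nonneg (μ := (volume : Measure (EuclideanSpace ℝ (Fin 3))))
      (p := 2) (q := 2) (f := fun k => (1 + ‖k‖ ^ 2)⁻¹) (g := fun k => ‖what u k‖)
      (by constructor <;> norm_num)
      (Filter.Eventually.of_forall fun _ => by positivity)
      (Filter.Eventually.of_forall fun _ => by positivity) (by simpa using hsL)
      (by simpa using hw.norm)
    refine this.trans ?_
    simp only [Real.rpow_two]
    rw [← hK, ← Real.sqrt_eq_rpow, ← Real.sqrt_eq_rpow, ← Real.sqrt_mul hK0]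
    have e : H1norm u ^ (3 / 2 : ℝ) = √(H1norm u ^ 3) := by
      rw [Real.sqrt_eq_rpow, ← Real.rpow_natCast, ← Real.rpow_mul hH0]; norm_num
    rw [e, ← Real.sqrt_mul (by positivity)]
    apply Real.sqrt_le_sqrt
    calc _ ≤ _ := mul_le_mul_of_nonneg_left hwb hK0
      _ = _ := by ring
  have hG12 : Integrable (fun k => 12 * ((1 + ‖k‖ ^ 2)⁻¹ * ‖what u k‖)) := hG.const_mul 12
  have hfinal : ∫ k, 12 * ((1 + ‖k‖ ^ 2)⁻¹ * ‖what u k‖) ≤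
      (12 * √(K * ((2 * Real.pi) ^ 3 * 8)) + 1) * H1norm u ^ (3 / 2 : ℝ) := by
    rw [integral_const_mul]
    have : 0 ≤ H1norm u ^ (3 / 2 : ℝ) := by positivity
    nlinarith
  have hb0 : ∀ k, |vker k| * ‖what u k‖ ≤ 12 * ((1 + ‖k‖ ^ 2)⁻¹ * ‖what u k‖) := by
    intro k
    have := vker_bound k
    have h3 : |vker k| ≤ (1 + ‖k‖) * |vker k| := by nlinarith [norm_nonneg k, abs_nonneg (vker k)]
    rw [← mul_assoc]
    gcongr
    linarith
  have hb1 : ∀ k, ‖k‖ * (|vker k| * ‖what u k‖) ≤ 12 * ((1 + ‖k‖ ^ 2)⁻¹ * ‖what u k‖) := by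
    intro k
    have := vker_bound k
    have h3 : ‖k‖ * |vker k| ≤ (1 + ‖k‖) * |vker k| := by nlinarith [norm_nonneg k, abs_nonneg (vker k)]
    rw [← mul_assoc, ← mul_assoc]
    exact mul_le_mul_of_nonneg_right (by linarith) (norm_nonneg _)
  have hvm : Measurable vker := by
    unfold vker ω
    fun_prop
  have hm0 : AEStronglyMeasurable (fun k => ((vker k : ℝ) : ℂ) * what u k) volume :=
    (Complex.measurable_ofReal.comp hvm).aestronglyMeasurable.mul hw.1
  refine ⟨?_, ?_, ?_, ?_⟩
  · refine hG12.mono' hm0 (Filter.Eventually.of_forall fun k => ?_)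
    rw [norm_mul, Complex.norm_real]
    exact hb0 k
  · refine hG12.mono' (continuous_norm.aestronglyMeasurable.mul hm0.norm) (Filter.Eventually.of_forall fun k => ?_)
    rw [norm_mul, norm_norm, norm_norm, norm_mul, Complex.norm_real]
    exact hb1 k
  · intro x
    refine (norm_integral_le_of_norm_le hG12 (Filter.Eventually.of_forall fun k => ?_)).trans hfinal
    rw [norm_mul, norm_mul, mul_comm Complex.I, Complex.norm_exp_ofReal_mul_I, mul_one, Complex.norm_real]
    exact hb0 k
  · intro x
    refine (norm_integral_le_of_norm_le hG12 (Filter.Eventually.of_forall fun k => ?_)).trans hfinal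
    have hk : ‖kC k‖ = ‖k‖ := by
      simp [kC, EuclideanSpace.norm_eq]
    rw [norm_smul, norm_mul, norm_mul, mul_comm Complex.I, Complex.norm_exp_ofReal_mul_I, mul_one, Complex.norm_real, hk, mul_comm]
    exact hb1 k
end
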